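/- Let s ≥ 1 and k ≥ 1, and let S be a DS(n, s) sequence such that at every position of S at most k symbols are active. Then |S| ≤ ((n + k)/k)·λ_s(3k) + 2n. (This is a precise form of the paper's bound λ_{s,k}(n) = O(n·λ_s(k)/k) on the maximum length of DSA(n, s, k) sequences.) -/

import Mathlib

/-- The alternating list `a, b, a, b, …` of length `m`. -/
def altList {α : Type*} (a b : α) : ℕ → List α
  | 0 => []
  | m + 1 => a :: altList b a m

/-- `S` is a Davenport–Schinzel sequence of order `s` on (at most) `n` symbols:
it uses at most `n` distinct symbols, no two adjacent elements are equal, and it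
contains no alternating subsequence `a, b, a, b, …` of length `s + 2` for distinct
symbols `a, b`. -/
def IsDSSeq {α : Type*} [DecidableEq α] (n s : ℕ) (S : List α) : Prop :=
  S.toFinset.card ≤ n ∧ S.Chain' (· ≠ ·) ∧
    ∀ a b : α, a ≠ b → ¬ (altList a b (s + 2)).Sublist S

/-- `lambdaDS s n` is the maximum length `λ_s(n)` of a `DS(n, s)` sequence. -/
noncomputable def lambdaDS (s n : ℕ) : ℕ :=
  sSup {m | ∃ S : List ℕ, IsDSSeq n s S ∧ S.length = m}

/-!
Cut `S` into `⌈n/k⌉` consecutive blocks, each contributing at most `k` symbols that have not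
occurred before it. Every other symbol of a block is active at the position just before the block,
so there are at most `k` of them; hence each block is a `DS(2k, s)` sequence, of length at most
`λ_s(2k) ≤ λ_s(3k)`.
-/

section

open List

variable {α β : Type*}

theorem altList_sublist_altList {m m' : ℕ} (h : m ≤ m') (a b : α) :
    altList a b m <+ altList a b m' := by
  induction m generalizing m' a b with
  | zero => exact nil_sublist _
  | succ m ih =>
    obtain ⟨t, rfl⟩ := Nat.exists_eq_add_of_le' h
    exact (ih (by lia) b a).cons_cons a

theorem map_altList (f : α → β) (a b : α) (m : ℕ) :
    (altList a b m).map f = altList (f a) (f b) m := by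
  induction m generalizing a b with
  | zero => rfl
  | succ m ih => simp [altList, ih]

theorem altList_sublist_of_sublist_cons {a b : α} (hab : a ≠ b) {m : ℕ} {S : List α}
    (h : altList a b m <+ b :: S) : altList a b m <+ S := by
  cases m with
  | zero => exact nil_sublist S
  | succ m => exact h.of_cons_of_ne hab

theorem altList_two_mul_count_sublist [DecidableEq α] {a b : α} (hab : a ≠ b) (S : List α) :
    altList a b (2 * S.consecutivePairs.count (a, b)) <+ S := by
  induction S with
  | nil => exact nil_sublist _
  | cons x T ih =>
    cases T with
    | nil => exact nil_sublist _
    | cons y T =>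
      rw [show (x :: y :: T).consecutivePairs = (x, y) :: (y :: T).consecutivePairs from rfl]
      by_cases hxy : (x, y) = (a, b)
      · obtain ⟨rfl, rfl⟩ := Prod.mk.inj hxy
        rw [count_cons_self]
        exact ((altList_sublist_of_sublist_cons hab ih).cons_cons y).cons_cons x
      · rw [count_cons_of_ne hxy]
        exact ih.cons x

theorem rel_of_mem_consecutivePairs {R : α → α → Prop} {S : List α} (hS : S.IsChain R)
    {p : α × α} (hp : p ∈ S.consecutivePairs) : R p.1 p.2 := by
  obtain ⟨i, hi, rfl⟩ := getElem_of_mem hp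
  simpa using isChain_iff_getElem.1 hS i (by simp only [length_zip, length_tail] at hi; lia)

theorem exists_prefix_card_toFinset_eq [DecidableEq α] {S : List α} {c : ℕ}
    (hc : c ≤ S.toFinset.card) : ∃ P, P <+: S ∧ P.toFinset.card = c := by
  induction S using reverseRecOn with
  | nil => exact ⟨[], prefix_rfl, by simp_all⟩
  | append_singleton S x ih =>
    by_cases hcS : c ≤ S.toFinset.card
    · obtain ⟨P, hP, hPc⟩ := ih hcS
      exact ⟨P, hP.trans (prefix_append S [x]), hPc⟩
    · have hinsert : (S ++ [x]).toFinset = insert x S.toFinset := by ext; simp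
      have hle := Finset.card_insert_le x S.toFinset
      exact ⟨S ++ [x], prefix_rfl, by rw [hinsert] at hc ⊢; lia⟩

theorem cast_ceilDiv_le_add_div {K : Type*} [Field K] [LinearOrder K] [IsStrictOrderedRing K]
    (n k : ℕ) : ((n ⌈/⌉ k : ℕ) : K) ≤ (n + k) / k :=
  calc ((n ⌈/⌉ k : ℕ) : K) ≤ ((n + k) / k : ℕ) := by
        rw [Nat.ceilDiv_eq_add_pred_div]
        exact_mod_cast Nat.div_le_div_right (Nat.sub_le _ _)
    _ ≤ (n + k) / k := by exact_mod_cast Nat.cast_div_le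

namespace IsDSSeq

variable [DecidableEq α] [DecidableEq β] {m n s : ℕ} {S T : List α}

theorem of_infix (hS : IsDSSeq n s S) (hT : T <:+: S) (hm : T.toFinset.card ≤ m) :
    IsDSSeq m s T :=
  ⟨hm, hS.2.1.infix hT, fun a b hab h => hS.2.2 a b hab (h.trans hT.sublist)⟩

theorem map {f : α → β} (hS : IsDSSeq n s S) (hf : Set.InjOn f {a | a ∈ S}) :
    IsDSSeq n s (S.map f) := by
  refine ⟨?_, ?_, fun a b hab hsub => ?_⟩
  · have himage : (S.map f).toFinset = S.toFinset.image f := by ext; simp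
    exact himage ▸ Finset.card_image_le.trans hS.1
  · exact (isChain_map f).2 <| IsChain.imp_of_mem_imp
      (fun x y hx hy hxy hfxy => hxy (hf hx hy hfxy)) hS.2.1
  · obtain ⟨x, hx, rfl⟩ := mem_map.1 (hsub.subset (by simp [altList] : a ∈ _))
    obtain ⟨y, hy, rfl⟩ := mem_map.1 (hsub.subset (by simp [altList] : b ∈ _))
    have : Nonempty α := ⟨x⟩
    let g := Function.invFunOn f {a | a ∈ S}
    have hg : Set.LeftInvOn g f {a | a ∈ S} := hf.leftInvOn_invFunOn
    have hback : (S.map f).map g = S := by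
      rw [map_map, map_congr_left (f := g ∘ f) (g := id) fun z hz => hg hz, map_id]
    have hpull := hsub.map g
    rw [hback, map_altList, hg hx, hg hy] at hpull
    exact hS.2.2 x y (ne_of_apply_ne f hab) hpull

theorem count_consecutivePairs_le (hS : IsDSSeq n s S) {p : α × α} (hp : p ∈ S.consecutivePairs) :
    S.consecutivePairs.count p ≤ (s + 1) / 2 := by
  obtain ⟨a, b⟩ := p
  have hab : a ≠ b := rel_of_mem_consecutivePairs hS.2.1 hp
  by_contra! hlt
  exact hS.2.2 a b hab <|
    (altList_sublist_altList (by lia) a b).trans (altList_two_mul_count_sublist hab S)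

theorem length_le (hS : IsDSSeq n s S) : S.length ≤ n * (n - 1) * ((s + 1) / 2) + 1 := by
  have hpairs : S.consecutivePairs.toFinset ⊆ S.toFinset.offDiag := fun p hp => by
    rw [mem_toFinset] at hp
    obtain ⟨h₁, h₂⟩ := of_mem_zip hp
    simpa using ⟨h₁, mem_of_mem_tail h₂, rel_of_mem_consecutivePairs hS.2.1 hp⟩
  have hcard : S.consecutivePairs.toFinset.card ≤ n * (n - 1) := by
    calc S.consecutivePairs.toFinset.card
        ≤ S.toFinset.offDiag.card := Finset.card_le_card hpairs
      _ = S.toFinset.card * (S.toFinset.card - 1) := by rw [Finset.offDiag_card, Nat.mul_sub_one]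
      _ ≤ n * (n - 1) := by gcongr <;> exact hS.1
  have hzip : S.consecutivePairs.length ≤ n * (n - 1) * ((s + 1) / 2) := by
    calc S.consecutivePairs.length
        = ∑ p ∈ S.consecutivePairs.toFinset, S.consecutivePairs.count p := by
          convert (sum_toFinset_count_eq_length S.consecutivePairs).symm
      _ ≤ S.consecutivePairs.toFinset.card * ((s + 1) / 2) :=
          Finset.sum_le_card_nsmul _ _ _ fun _ hp =>
            hS.count_consecutivePairs_le (mem_toFinset.1 hp)
      _ ≤ n * (n - 1) * ((s + 1) / 2) := Nat.mul_le_mul_right _ hcard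
  simp only [length_zip, length_tail] at hzip
  lia

theorem length_le_lambdaDS (hS : IsDSSeq n s S) : S.length ≤ lambdaDS s n := by
  -- Were this set unbounded, `sSup` would give it the junk value `0`.
  have hbdd : BddAbove {m | ∃ T : List ℕ, IsDSSeq n s T ∧ T.length = m} :=
    ⟨n * (n - 1) * ((s + 1) / 2) + 1, by rintro _ ⟨T, hT, rfl⟩; exact hT.length_le⟩
  have hrelabel : IsDSSeq n s (S.map (S.idxOf ·)) := hS.map fun _ ha _ _ => (idxOf_inj ha).1
  exact le_csSup hbdd ⟨_, hrelabel, length_map _⟩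

end IsDSSeq

theorem lambdaDS_mono (s : ℕ) : Monotone (lambdaDS s) := by
  intro m n hmn
  refine csSup_le' ?_
  rintro _ ⟨T, hT, rfl⟩
  exact (hT.of_infix infix_rfl (hT.1.trans hmn)).length_le_lambdaDS

/-- The symbols of `S` that are active at position `i`, positions being counted from `0`. -/
def activeSymbols [DecidableEq α] (S : List α) (i : ℕ) : Finset α :=
  (S.take (i + 1)).toFinset ∩ (S.drop (i + 1)).toFinset

theorem activeSymbols_subset_of_prefix [DecidableEq α] {P S : List α} (h : P <+: S) (i : ℕ) :
    activeSymbols P i ⊆ activeSymbols S i := by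
  obtain ⟨T, rfl⟩ := h
  intro a
  simp only [activeSymbols, take_append, drop_append, Finset.mem_inter, mem_toFinset, mem_append]
  tauto

/-- `S` is a `DSA(n, s, k)` sequence: a `DS(n, s)` sequence with at most `k` symbols active at
every position. -/
def IsDSASeq [DecidableEq α] (n s k : ℕ) (S : List α) : Prop :=
  IsDSSeq n s S ∧ ∀ i < S.length, (activeSymbols S i).card ≤ k

namespace IsDSASeq

variable [DecidableEq α] {m n s k : ℕ} {P S T : List α}

theorem of_prefix (hS : IsDSASeq n s k S) (hP : P <+: S) (hm : P.toFinset.card ≤ m) :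
    IsDSASeq m s k P :=
  ⟨hS.1.of_infix hP.isInfix hm, fun i hi =>
    (Finset.card_le_card (activeSymbols_subset_of_prefix hP i)).trans
      (hS.2 i (hi.trans_le hP.length_le))⟩

theorem card_inter_le (h : IsDSASeq n s k (P ++ T)) : (P.toFinset ∩ T.toFinset).card ≤ k := by
  rcases P with _ | ⟨p, P⟩
  · simp
  · simpa [activeSymbols] using h.2 P.length (by simp)

theorem isDSSeq_right (h : IsDSASeq n s k (P ++ T)) (hn : n ≤ P.toFinset.card + m) :
    IsDSSeq (k + m) s T := by
  have hnew : (T.toFinset \ P.toFinset).card ≤ m := by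
    have hcard := Finset.card_sdiff_add_card T.toFinset P.toFinset
    rw [Finset.union_comm, ← toFinset_append] at hcard
    have hle : (P ++ T).toFinset.card ≤ n := h.1.1
    lia
  refine h.1.of_infix (suffix_append P T).isInfix ?_
  calc T.toFinset.card
      = (P.toFinset ∩ T.toFinset).card + (T.toFinset \ P.toFinset).card := by
        rw [Finset.inter_comm, Finset.card_inter_add_card_sdiff]
    _ ≤ k + m := add_le_add h.card_inter_le hnew

theorem length_le_mul_lambdaDS {q : ℕ} (hS : IsDSASeq (k * q) s k S) :
    S.length ≤ q * lambdaDS s (2 * k) := by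
  induction q generalizing S with
  | zero => simpa using hS.1.1
  | succ q ih =>
    by_cases hfew : S.toFinset.card ≤ k * q
    · exact (ih (hS.of_prefix prefix_rfl hfew)).trans (Nat.mul_le_mul_right _ q.le_succ)
    · obtain ⟨P, hP, hPcard⟩ := exists_prefix_card_toFinset_eq (not_le.1 hfew).le
      have hPlen := ih (hS.of_prefix hP hPcard.le)
      obtain ⟨T, rfl⟩ := hP
      have hT : IsDSSeq (k + k) s T := hS.isDSSeq_right (by rw [hPcard, Nat.mul_succ])
      calc (P ++ T).length = P.length + T.length := length_append
        _ ≤ q * lambdaDS s (2 * k) + lambdaDS s (2 * k) :=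
            add_le_add hPlen (two_mul k ▸ hT.length_le_lambdaDS)
        _ = (q + 1) * lambdaDS s (2 * k) := (Nat.succ_mul _ _).symm

end IsDSASeq

theorem dsa_length_le_general [DecidableEq α] {n s k : ℕ} (hk : 0 < k) {S : List α}
    (hS : IsDSASeq n s k S) : S.length ≤ (n ⌈/⌉ k) * lambdaDS s (2 * k) :=
  (hS.of_prefix prefix_rfl (hS.1.1.trans (le_smul_ceilDiv hk))).length_le_mul_lambdaDS

end

/-- Bound on `DSA(n, s, k)` sequences: if `S` is a `DS(n, s)` sequence such that at
every position at most `k` symbols are active (a symbol is active at position `i`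
if it occurs both at some position `≤ i` and at some position `> i`; equivalently,
it occurs both in `S.take (i+1)` and in `S.drop (i+1)`), then
`|S| ≤ ((n + k)/k) * λ_s(3k) + 2n`. -/
theorem dsa_length_le {α : Type*} [DecidableEq α]
    (n s k : ℕ) (hs : 1 ≤ s) (hk : 1 ≤ k)
    (S : List α) (hS : IsDSSeq n s S)
    (hactive : ∀ i < S.length,
      ((S.take (i + 1)).toFinset ∩ (S.drop (i + 1)).toFinset).card ≤ k) :
    (S.length : ℝ) ≤ ((n + k : ℝ) / k) * lambdaDS s (3 * k) + 2 * n := by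
  calc (S.length : ℝ)
      ≤ (n ⌈/⌉ k : ℕ) * lambdaDS s (2 * k) :=
        mod_cast dsa_length_le_general hk ⟨hS, hactive⟩
    _ ≤ ((n + k : ℝ) / k) * lambdaDS s (3 * k) := by
        gcongr
        · exact cast_ceilDiv_le_add_div n k
        · exact lambdaDS_mono s (by lia)
    _ ≤ ((n + k : ℝ) / k) * lambdaDS s (3 * k) + 2 * n := le_add_of_nonneg_right (by positivity)
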